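/- Let λ > 0, τ > 0, c > 0. Let N be a Poisson random variable with mean λτ, and, conditionally on N = k (for k ≥ 2), let Θ_(1) ≤ … ≤ Θ_(k) be distributed as the order statistics of k independent uniform random variables on [0, τ], independent across the conditioning. Define H = #{ i ∈ {2, …, N} : Θ_(i) − Θ_(i−1) < c } (with H = 0 when N ≤ 1). Then E[H] = λτ − 1 + e^{−λτ} if τ < c, and E[H] = (λτ − 1)(1 − e^{−λc}) + λc · e^{−λc} if τ ≥ c. -/

import Mathlib

open MeasureTheory Real

/-- The law of the order statistics of `k` i.i.d. uniform random variables on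
`[0, τ]`: the pushforward of the product of uniform measures under the sorting
map. -/
noncomputable def orderStatisticsLaw (τ : ℝ) (k : ℕ) : Measure (Fin k → ℝ) :=
  Measure.map (fun u : Fin k → ℝ => fun i => u (Tuple.sort u i))
    (Measure.pi fun _ : Fin k =>
      (ENNReal.ofReal τ)⁻¹ • volume.restrict (Set.Icc (0 : ℝ) τ))

theorem measurable_apply_sort (k : ℕ) :
    Measurable fun u : Fin k → ℝ => fun i => u (Tuple.sort u i) := by
  let _ : MeasurableSpace (Equiv.Perm (Fin k)) := ⊤
  have hsort : Measurable fun u : Fin k → ℝ => Tuple.sort u := by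
    refine measurable_to_countable' fun σ => ?_
    have : (fun u : Fin k → ℝ => Tuple.sort u) ⁻¹' {σ} =
        {u | (∀ i j, i ≤ j → u (σ i) ≤ u (σ j)) ∧
          ∀ i j, i < j → u (σ i) = u (σ j) → σ i < σ j} := by
      ext u
      rw [Set.mem_preimage, Set.mem_singleton_iff, eq_comm, Tuple.eq_sort_iff]
      rfl
    rw [this]
    measurability
  refine measurable_pi_lambda _ fun i => ?_
  have : Measurable fun p : Equiv.Perm (Fin k) × (Fin k → ℝ) => p.2 (p.1 i) :=
    measurable_from_prod_countable_right fun σ => measurable_pi_apply (σ i)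
  exact this.comp (hsort.prodMk measurable_id)

theorem sum_gap_lt_eq_sum_exists {n : ℕ} {w : Fin (n + 1) → ℝ} (hw : StrictMono w) (c : ℝ) :
    ∑ j : Fin n, {w : Fin (n + 1) → ℝ | w j.succ - w j.castSucc < c}.indicator 1 w =
      ∑ i, {w : Fin (n + 1) → ℝ | ∃ l, w l ∈ Set.Ioo (w i) (w i + c)}.indicator
        (1 : (Fin (n + 1) → ℝ) → ENNReal) w := by
  rw [Fin.sum_univ_castSucc]
  have hlast : w ∉ {w : Fin (n + 1) → ℝ |
      ∃ l, w l ∈ Set.Ioo (w (Fin.last n)) (w (Fin.last n) + c)} := by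
    rintro ⟨l, hl, -⟩
    exact absurd (hw.monotone (Fin.le_last l)) hl.not_ge
  rw [Set.indicator_of_notMem hlast, add_zero]
  refine Finset.sum_congr rfl fun j _ => ?_
  have hiff : w ∈ {w : Fin (n + 1) → ℝ | w j.succ - w j.castSucc < c} ↔
      w ∈ {w : Fin (n + 1) → ℝ |
        ∃ l, w l ∈ Set.Ioo (w j.castSucc) (w j.castSucc + c)} := by
    constructor
    · intro h
      exact ⟨j.succ, hw Fin.castSucc_lt_succ, by simp only [Set.mem_ofPred_eq] at h; linarith⟩
    · rintro ⟨l, hl, hlc⟩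
      have h := hw.monotone (Fin.castSucc_lt_iff_succ_le.1 (hw.lt_iff_lt.1 hl))
      simp only [Set.mem_ofPred_eq]
      linarith
  by_cases h : w ∈ {w : Fin (n + 1) → ℝ | w j.succ - w j.castSucc < c}
  · rw [Set.indicator_of_mem h, Set.indicator_of_mem (hiff.1 h)]
  · rw [Set.indicator_of_notMem h, Set.indicator_of_notMem (mt hiff.2 h)]

theorem ae_pi_injective (n : ℕ) (μ : Measure ℝ) [IsProbabilityMeasure μ] [NullSingletonClass μ] :
    ∀ᵐ u ∂Measure.pi fun _ : Fin (n + 1) => μ, Function.Injective u := by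
  have hne : ∀ i l : Fin (n + 1), i ≠ l →
      ∀ᵐ u ∂Measure.pi fun _ : Fin (n + 1) => μ, u i ≠ u l := by
    intro i l hil
    obtain ⟨m, rfl⟩ := Fin.exists_succAbove_eq hil.symm
    have hmp := measurePreserving_piFinSuccAbove (fun _ : Fin (n + 1) => μ) i
    have hae : ∀ᵐ p ∂μ.prod (Measure.pi fun _ : Fin n => μ), p.1 ≠ p.2 m := by
      have hm : MeasurableSet {p : ℝ × (Fin n → ℝ) | p.1 = p.2 m} :=
        measurableSet_eq_fun (by fun_prop) (by fun_prop)
      rw [ae_iff]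
      simp only [ne_eq, not_not]
      rw [Measure.measure_prod_null hm]
      refine Filter.Eventually.of_forall fun x => ?_
      refine (congrArg _ ?_).trans (Measure.pi_hyperplane (fun _ : Fin n => μ) m x)
      ext v
      exact eq_comm
    exact hmp.quasiMeasurePreserving.ae hae
  have hall : ∀ᵐ u ∂Measure.pi fun _ : Fin (n + 1) => μ, ∀ i l, i ≠ l → u i ≠ u l := by
    simpa only [ae_all_iff] using hne
  filter_upwards [hall] with u hu i l h
  by_contra hil
  exact hu i l hil h

theorem measurableSet_exists_mem_Ioo {n : ℕ} (c : ℝ) (i : Fin n) :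
    MeasurableSet {u : Fin n → ℝ | ∃ l, u l ∈ Set.Ioo (u i) (u i + c)} := by
  simp only [Set.mem_Ioo]
  measurability

theorem pi_forall_notMem_Ioo (n : ℕ) (μ : Measure ℝ) [IsProbabilityMeasure μ] (c : ℝ)
    (i : Fin (n + 1)) :
    (Measure.pi fun _ : Fin (n + 1) => μ) {u | ∃ l, u l ∈ Set.Ioo (u i) (u i + c)}ᶜ =
      ∫⁻ x, μ (Set.Ioo x (x + c))ᶜ ^ n ∂μ := by
  have hmp := measurePreserving_piFinSuccAbove (fun _ : Fin (n + 1) => μ) i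
  have hm : MeasurableSet {p : ℝ × (Fin n → ℝ) | ∀ l, p.2 l ∉ Set.Ioo p.1 (p.1 + c)} := by
    simp only [Set.mem_Ioo]
    measurability
  have hpre : {u : Fin (n + 1) → ℝ | ∃ l, u l ∈ Set.Ioo (u i) (u i + c)}ᶜ =
      MeasurableEquiv.piFinSuccAbove (fun _ => ℝ) i ⁻¹'
        {p : ℝ × (Fin n → ℝ) | ∀ l, p.2 l ∉ Set.Ioo p.1 (p.1 + c)} := by
    ext u
    simp only [Set.mem_compl_iff, Set.mem_ofPred_eq, Set.mem_preimage, not_exists]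
    constructor
    · exact fun h l => h (i.succAbove l)
    · intro h l
      by_cases hl : l = i
      · subst hl
        simp
      · obtain ⟨m, rfl⟩ := Fin.exists_succAbove_eq hl
        exact h m
  rw [hpre, hmp.measure_preimage hm.nullMeasurableSet, Measure.prod_apply hm]
  refine lintegral_congr fun x => ?_
  have hset : Prod.mk x ⁻¹' {p : ℝ × (Fin n → ℝ) | ∀ l, p.2 l ∉ Set.Ioo p.1 (p.1 + c)} =
      Set.univ.pi fun _ => (Set.Ioo x (x + c))ᶜ := by
    ext v
    simp
  rw [hset, Measure.pi_pi]
  simp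

theorem integral_one_sub_min_pow (n : ℕ) {τ d : ℝ} (hτ : 0 < τ) (hd : 0 ≤ d) (hdτ : d ≤ τ) :
    ∫ x in (0 : ℝ)..τ, (1 - min d (τ - x) / τ) ^ n =
      τ * ((1 - d / τ) ^ (n + 1) + (1 - (1 - d / τ) ^ (n + 1)) / (n + 1)) := by
  have hcont : Continuous fun x : ℝ => (1 - min d (τ - x) / τ) ^ n := by fun_prop
  rw [← intervalIntegral.integral_add_adjacent_intervals (b := τ - d)
    (hcont.intervalIntegrable _ _) (hcont.intervalIntegrable _ _)]
  have h1 : ∫ x in (0 : ℝ)..(τ - d), (1 - min d (τ - x) / τ) ^ n =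
      ∫ x in (0 : ℝ)..(τ - d), (1 - d / τ) ^ n := by
    refine intervalIntegral.integral_congr fun x hx => ?_
    rw [Set.uIcc_of_le (by linarith)] at hx
    simp only [min_eq_left (show d ≤ τ - x by linarith [hx.2])]
  have h2 : ∫ x in (τ - d)..τ, (1 - min d (τ - x) / τ) ^ n =
      ∫ x in (τ - d)..τ, x ^ n / τ ^ n := by
    refine intervalIntegral.integral_congr fun x hx => ?_
    rw [Set.uIcc_of_le (by linarith)] at hx
    simp only [min_eq_right (show τ - x ≤ d by linarith [hx.1]), ← div_pow]
    congr 1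
    field_simp
    ring
  rw [h1, h2, intervalIntegral.integral_const, intervalIntegral.integral_div, integral_pow,
    show 1 - d / τ = (τ - d) / τ by field_simp]
  simp only [div_pow, smul_eq_mul, sub_zero]
  have : (n : ℝ) + 1 ≠ 0 := by positivity
  field_simp
  ring

theorem isProbabilityMeasure_uniform_Icc {τ : ℝ} (hτ : 0 < τ) :
    IsProbabilityMeasure ((ENNReal.ofReal τ)⁻¹ • volume.restrict (Set.Icc (0 : ℝ) τ)) := by
  constructor
  rw [Measure.smul_apply, Measure.restrict_apply_univ, Real.volume_Icc, sub_zero, smul_eq_mul]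
  exact ENNReal.inv_mul_cancel (by simpa using hτ) ENNReal.ofReal_ne_top

theorem uniform_Icc_compl_Ioo {τ c x : ℝ} (hτ : 0 < τ) (hc : 0 < c) (hx : x ∈ Set.Icc 0 τ) :
    ((ENNReal.ofReal τ)⁻¹ • volume.restrict (Set.Icc (0 : ℝ) τ)) (Set.Ioo x (x + c))ᶜ =
      ENNReal.ofReal (1 - min (min c τ) (τ - x) / τ) := by
  have := isProbabilityMeasure_uniform_Icc hτ
  have hnonneg : 0 ≤ min c (τ - x) := le_min hc.le (by linarith [hx.2])
  rw [prob_compl_eq_one_sub measurableSet_Ioo, Measure.smul_apply,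
    ← Measure.restrict_congr_set Ioo_ae_eq_Icc, Measure.restrict_apply measurableSet_Ioo,
    Set.Ioo_inter_Ioo, Real.volume_Ioo, max_eq_left hx.1, smul_eq_mul,
    ← ENNReal.ofReal_inv_of_pos hτ, ← ENNReal.ofReal_mul (by positivity), min_assoc,
    min_eq_right (show τ - x ≤ τ by linarith [hx.1]), ← ENNReal.ofReal_one,
    ← ENNReal.ofReal_sub]
  · congr 2
    rw [← min_sub_sub_right, add_sub_cancel_left]
    field_simp
  · rw [← min_sub_sub_right, add_sub_cancel_left]
    positivity

theorem lintegral_uniform_Icc_compl_Ioo_pow (n : ℕ) {τ c : ℝ} (hτ : 0 < τ) (hc : 0 < c) :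
    ∫⁻ x, ((ENNReal.ofReal τ)⁻¹ • volume.restrict (Set.Icc (0 : ℝ) τ)) (Set.Ioo x (x + c))ᶜ ^ n
        ∂((ENNReal.ofReal τ)⁻¹ • volume.restrict (Set.Icc (0 : ℝ) τ)) =
      ENNReal.ofReal ((1 - min c τ / τ) ^ (n + 1) +
        (1 - (1 - min c τ / τ) ^ (n + 1)) / (n + 1)) := by
  have hbase : ∀ x ∈ Set.Icc 0 τ, 0 ≤ 1 - min (min c τ) (τ - x) / τ := by
    intro x hx
    rw [sub_nonneg, div_le_one hτ]
    exact (min_le_left _ _).trans (min_le_right _ _)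
  have hcont : Continuous fun x : ℝ => (1 - min (min c τ) (τ - x) / τ) ^ n := by fun_prop
  rw [lintegral_smul_measure]
  rw [setLIntegral_congr_fun (g := fun x => ENNReal.ofReal ((1 - min (min c τ) (τ - x) / τ) ^ n))
    measurableSet_Icc fun x hx => ?_]
  · rw [← ofReal_integral_eq_lintegral_ofReal hcont.continuousOn.integrableOn_Icc
      ((ae_restrict_iff' measurableSet_Icc).2
        (Filter.Eventually.of_forall fun x hx => pow_nonneg (hbase x hx) n)),
      integral_Icc_eq_integral_Ioc, ← intervalIntegral.integral_of_le hτ.le,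
      integral_one_sub_min_pow n hτ (le_min hc.le hτ.le) (min_le_right _ _), smul_eq_mul,
      ENNReal.ofReal_mul hτ.le, ← mul_assoc,
      ENNReal.inv_mul_cancel (by simpa using hτ) ENNReal.ofReal_ne_top, one_mul]
  · simp only [uniform_Icc_compl_Ioo hτ hc hx, ENNReal.ofReal_pow (hbase x hx)]

theorem sum_orderStatisticsLaw_gap_lt (n : ℕ) {τ c : ℝ} (hτ : 0 < τ) (hc : 0 < c) :
    ∑ j : Fin n, orderStatisticsLaw τ (n + 1) {w | w j.succ - w j.castSucc < c} =
      ENNReal.ofReal (n * (1 - (1 - min c τ / τ) ^ (n + 1))) := by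
  have hprob := isProbabilityMeasure_uniform_Icc hτ
  have hgap : ∀ j : Fin n,
      MeasurableSet {w : Fin (n + 1) → ℝ | w j.succ - w j.castSucc < c} := fun j =>
    measurableSet_lt (by fun_prop) (by fun_prop)
  have hq0 : 0 ≤ 1 - min c τ / τ := by
    rw [sub_nonneg, div_le_one hτ]
    exact min_le_right _ _
  have hq1 : 1 - min c τ / τ ≤ 1 := by
    have : 0 ≤ min c τ / τ := by positivity
    linarith
  have hnull : NullSingletonClass
      ((ENNReal.ofReal τ)⁻¹ • volume.restrict (Set.Icc (0 : ℝ) τ)) := by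
    constructor
    intro x
    rw [Measure.smul_apply, measure_singleton, smul_zero]
  have hstep : ∑ j : Fin n, orderStatisticsLaw τ (n + 1) {w | w j.succ - w j.castSucc < c} =
      ∑ i : Fin (n + 1), (Measure.pi fun _ : Fin (n + 1) =>
        (ENNReal.ofReal τ)⁻¹ • volume.restrict (Set.Icc (0 : ℝ) τ))
          {u | ∃ l, u l ∈ Set.Ioo (u i) (u i + c)} := by
    simp_rw [← lintegral_indicator_one (measurableSet_exists_mem_Ioo c _),
      ← lintegral_indicator_one (hgap _)]
    rw [← lintegral_finsetSum _ fun i _ =>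
        measurable_one.indicator (measurableSet_exists_mem_Ioo c i),
      ← lintegral_finsetSum _ fun j _ => measurable_one.indicator (hgap j),
      orderStatisticsLaw, lintegral_map (Finset.measurable_fun_sum _ fun j _ =>
        measurable_one.indicator (hgap j)) (measurable_apply_sort _)]
    refine lintegral_congr_ae ?_
    filter_upwards [ae_pi_injective n
      ((ENNReal.ofReal τ)⁻¹ • volume.restrict (Set.Icc (0 : ℝ) τ))] with u hu
    have hmono : StrictMono (u ∘ Tuple.sort u) :=
      (Tuple.monotone_sort u).strictMono_of_injective (hu.comp (Tuple.sort u).injective)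
    refine (sum_gap_lt_eq_sum_exists hmono c).trans ?_
    refine Fintype.sum_equiv (Tuple.sort u) _ _ fun i => ?_
    have hiff : (∃ l, u (Tuple.sort u l) ∈ Set.Ioo (u (Tuple.sort u i)) (u (Tuple.sort u i) + c)) ↔
        ∃ l, u l ∈ Set.Ioo (u (Tuple.sort u i)) (u (Tuple.sort u i) + c) :=
      ((Tuple.sort u).surjective.exists
        (p := fun l => u l ∈ Set.Ioo (u (Tuple.sort u i)) (u (Tuple.sort u i) + c))).symm
    simp only [Set.indicator, Set.mem_ofPred_eq, Function.comp_apply, hiff, Pi.one_apply]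
  have hone : ∀ i : Fin (n + 1), (Measure.pi fun _ : Fin (n + 1) =>
        (ENNReal.ofReal τ)⁻¹ • volume.restrict (Set.Icc (0 : ℝ) τ))
          {u | ∃ l, u l ∈ Set.Ioo (u i) (u i + c)} =
      ENNReal.ofReal (1 - ((1 - min c τ / τ) ^ (n + 1) +
        (1 - (1 - min c τ / τ) ^ (n + 1)) / (n + 1))) := by
    intro i
    have hpow := pow_le_one₀ (n := n + 1) hq0 hq1
    have hpow0 : 0 ≤ (1 - min c τ / τ) ^ (n + 1) := by positivity
    have hle : 0 ≤ (1 - (1 - min c τ / τ) ^ (n + 1)) / ((n : ℝ) + 1) :=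
      div_nonneg (by linarith) (by positivity)
    rw [← compl_compl {u : Fin (n + 1) → ℝ | ∃ l, u l ∈ Set.Ioo (u i) (u i + c)},
      prob_compl_eq_one_sub (measurableSet_exists_mem_Ioo c i).compl, pi_forall_notMem_Ioo,
      lintegral_uniform_Icc_compl_Ioo_pow n hτ hc, ENNReal.ofReal_sub _ (by linarith),
      ENNReal.ofReal_one]
  rw [hstep, Finset.sum_congr rfl fun i _ => hone i, Finset.sum_const, Finset.card_univ,
    Fintype.card_fin, nsmul_eq_mul, ← ENNReal.ofReal_natCast, ← ENNReal.ofReal_mul (by positivity)]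
  congr 1
  push_cast
  field_simp
  ring

theorem hasSum_natCast_sub_one_mul_pow_div_factorial (x : ℝ) :
    HasSum (fun k : ℕ => ((k : ℝ) - 1) * (x ^ k / k.factorial)) ((x - 1) * Real.exp x) := by
  have hexp : HasSum (fun k : ℕ => x ^ k / (k.factorial : ℝ)) (Real.exp x) := by
    rw [Real.exp_eq_exp_ℝ]
    exact NormedSpace.expSeries_div_hasSum_exp x
  have hmean : HasSum (fun k : ℕ => (k : ℝ) * (x ^ k / k.factorial)) (x * Real.exp x) := by
    rw [← hasSum_nat_add_iff' 1]
    simp only [Finset.range_one, Finset.sum_singleton, CharP.cast_eq_zero, zero_mul, sub_zero]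
    refine (hexp.mul_left x).congr_fun fun k => ?_
    rw [Nat.factorial_succ]
    push_cast
    field_simp
    ring
  rw [show (x - 1) * Real.exp x = x * Real.exp x - Real.exp x by ring]
  exact (hmean.sub hexp).congr_fun fun k => by ring

theorem hasSum_poisson_mul_expected_hits (a q : ℝ) :
    HasSum (fun k : ℕ => Real.exp (-a) * a ^ k / k.factorial * (((k : ℝ) - 1) * (1 - q ^ k)))
      (a - 1 - (a * q - 1) * Real.exp (a * q - a)) := by
  have hval : a - 1 - (a * q - 1) * Real.exp (a * q - a) =
      Real.exp (-a) * ((a - 1) * Real.exp a - (a * q - 1) * Real.exp (a * q)) := by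
    rw [sub_eq_add_neg (a * q) a, Real.exp_add, Real.exp_neg]
    field_simp
  rw [hval]
  refine (((hasSum_natCast_sub_one_mul_pow_div_factorial a).sub
    (hasSum_natCast_sub_one_mul_pow_div_factorial (a * q))).mul_left
      (Real.exp (-a))).congr_fun fun k => ?_
  rw [mul_pow]
  ring

theorem lintegral_card_gap_lt {Ω : Type*} [MeasurableSpace Ω] (P : Measure Ω)
    (c : ℝ) (N : Ω → ℕ) (Θ : Ω → ℕ → ℝ) (hNmeas : Measurable N)
    (hΘmeas : ∀ i, Measurable fun ω => Θ ω i) :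
    ∫⁻ ω, (((Finset.range (N ω - 1)).filter
        (fun j => Θ ω (j + 1) - Θ ω j < c)).card : ENNReal) ∂P =
      ∑' k : ℕ, ∑ j ∈ Finset.range (k - 1), P {ω | N ω = k ∧ Θ ω (j + 1) - Θ ω j < c} := by
  have hm : ∀ k j : ℕ, MeasurableSet {ω | N ω = k ∧ Θ ω (j + 1) - Θ ω j < c} := fun k j =>
    (hNmeas (measurableSet_singleton k)).inter
      (measurableSet_lt ((hΘmeas _).sub (hΘmeas _)) measurable_const)
  simp_rw [← lintegral_indicator_one (hm _ _)]
  simp_rw [← lintegral_finsetSum _ fun j _ => measurable_one.indicator (hm _ j)]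
  rw [← lintegral_tsum fun k => (Finset.measurable_fun_sum _ fun j _ =>
    measurable_one.indicator (hm k j)).aemeasurable]
  refine lintegral_congr fun ω => ?_
  rw [tsum_eq_single (N ω) fun k hk => Finset.sum_eq_zero fun j _ =>
    Set.indicator_of_notMem (fun h => hk h.1.symm) _]
  simp [Set.indicator, Finset.sum_boole]

theorem measurable_card_gap_lt {Ω : Type*} [MeasurableSpace Ω] (c : ℝ) {N : Ω → ℕ}
    {Θ : Ω → ℕ → ℝ} (hNmeas : Measurable N) (hΘmeas : ∀ i, Measurable fun ω => Θ ω i) :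
    Measurable fun ω => (((Finset.range (N ω - 1)).filter
      (fun j => Θ ω (j + 1) - Θ ω j < c)).card : ℝ) := by
  simp_rw [← Finset.sum_boole]
  have hpair : Measurable fun p : ℕ × Ω => ∑ j ∈ Finset.range (p.1 - 1),
      if Θ p.2 (j + 1) - Θ p.2 j < c then (1 : ℝ) else 0 := by
    refine measurable_from_prod_countable_right fun k => ?_
    dsimp only
    refine Finset.measurable_fun_sum _ fun j _ => ?_
    refine Measurable.ite ?_ measurable_const measurable_const
    exact measurableSet_lt ((hΘmeas (j + 1)).sub (hΘmeas j)) measurable_const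
  have hcomp := hpair.comp (hNmeas.prodMk measurable_id)
  simpa only [Function.comp_def, id_eq] using hcomp

theorem integral_card_gap_lt {Ω : Type*} [MeasurableSpace Ω] (P : Measure Ω)
    {lam τ c : ℝ} (hlam : 0 < lam) (hτ : 0 < τ) (hc : 0 < c)
    (N : Ω → ℕ) (Θ : Ω → ℕ → ℝ) (hNmeas : Measurable N)
    (hΘmeas : ∀ i, Measurable fun ω => Θ ω i)
    (hN : ∀ k : ℕ, P {ω | N ω = k} =
      ENNReal.ofReal (Real.exp (-(lam * τ)) * (lam * τ) ^ k / (Nat.factorial k)))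
    (hcond : ∀ k : ℕ, 2 ≤ k → ∀ A : Set (Fin k → ℝ), MeasurableSet A →
      P {ω | N ω = k ∧ (fun i : Fin k => Θ ω i.1) ∈ A} =
        P {ω | N ω = k} * orderStatisticsLaw τ k A) :
    ∫ ω, (((Finset.range (N ω - 1)).filter
        (fun j => Θ ω (j + 1) - Θ ω j < c)).card : ℝ) ∂P =
      (lam * τ - 1) * (1 - Real.exp (-(lam * min c τ))) +
        lam * min c τ * Real.exp (-(lam * min c τ)) := by
  have hcard := measurable_card_gap_lt c hNmeas hΘmeas
  have hq0 : 0 ≤ 1 - min c τ / τ := by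
    rw [sub_nonneg, div_le_one hτ]
    exact min_le_right _ _
  have hq1 : 1 - min c τ / τ ≤ 1 := by
    have : 0 ≤ min c τ / τ := by positivity
    linarith
  have hterm : ∀ k : ℕ,
      ∑ j ∈ Finset.range (k - 1), P {ω | N ω = k ∧ Θ ω (j + 1) - Θ ω j < c} =
        ENNReal.ofReal (Real.exp (-(lam * τ)) * (lam * τ) ^ k / k.factorial *
          (((k : ℝ) - 1) * (1 - (1 - min c τ / τ) ^ k))) := by
    rintro (_ | _ | n)
    · simp
    · simp
    · have hprob : ∀ j : Fin (n + 1),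
          P {ω | N ω = n + 1 + 1 ∧ Θ ω (j + 1) - Θ ω j < c} =
            P {ω | N ω = n + 1 + 1} *
              orderStatisticsLaw τ (n + 1 + 1) {w | w j.succ - w j.castSucc < c} := fun j =>
        hcond (n + 1 + 1) (by omega) {w | w j.succ - w j.castSucc < c}
          (measurableSet_lt (by fun_prop) (by fun_prop))
      rw [Nat.add_sub_cancel, ← Fin.sum_univ_eq_sum_range
          (fun j => P {ω | N ω = n + 1 + 1 ∧ Θ ω (j + 1) - Θ ω j < c}),
        Finset.sum_congr rfl fun j _ => hprob j, ← Finset.mul_sum,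
        sum_orderStatisticsLaw_gap_lt (n + 1) hτ hc, hN, ← ENNReal.ofReal_mul (by positivity)]
      push_cast
      rw [add_sub_cancel_right]
  have hsum := hasSum_poisson_mul_expected_hits (lam * τ) (1 - min c τ / τ)
  have hnonneg : ∀ k : ℕ, 0 ≤ Real.exp (-(lam * τ)) * (lam * τ) ^ k / k.factorial *
      (((k : ℝ) - 1) * (1 - (1 - min c τ / τ) ^ k)) := by
    rintro (_ | k)
    · simp
    · refine mul_nonneg (by positivity) (mul_nonneg ?_ ?_)
      · push_cast
        rw [add_sub_cancel_right]
        positivity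
      · exact sub_nonneg.2 (pow_le_one₀ hq0 hq1)
  rw [integral_eq_lintegral_of_nonneg_ae (Filter.Eventually.of_forall fun ω => Nat.cast_nonneg _)
    hcard.aestronglyMeasurable]
  simp_rw [ENNReal.ofReal_natCast]
  rw [lintegral_card_gap_lt P c N Θ hNmeas hΘmeas, tsum_congr hterm,
    ← ENNReal.ofReal_tsum_of_nonneg hnonneg hsum.summable, hsum.tsum_eq,
    ENNReal.toReal_ofReal (hsum.nonneg hnonneg)]
  have hmul : lam * τ * (1 - min c τ / τ) = lam * τ - lam * min c τ := by
    field_simp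
  rw [hmul, show lam * τ - lam * min c τ - lam * τ = -(lam * min c τ) by ring]
  ring

/-- Proposition 3 (Che approximation for the Box Model): a document with
lifespan `τ` and rate `lam` receives a Poisson(`lam·τ`) number `N` of requests
whose times, given `N = k` (for `k ≥ 2`), are the order statistics of `k`
i.i.d. uniforms on `[0, τ]`; a request is a hit when the gap to the previous
request is `< c`.  Then the expected number of hits is
`λτ − 1 + e^{−λτ}` if `τ < c`, and
`(λτ − 1)(1 − e^{−λc}) + λc e^{−λc}` if `τ ≥ c`. -/
theorem che_approximation_box_model
    {Ω : Type*} [MeasurableSpace Ω] (P : Measure Ω) [IsProbabilityMeasure P]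
    (lam τ c : ℝ) (hlam : 0 < lam) (hτ : 0 < τ) (hc : 0 < c)
    (N : Ω → ℕ) (Θ : Ω → ℕ → ℝ) (hNmeas : Measurable N)
    (hΘmeas : ∀ i, Measurable fun ω => Θ ω i)
    (hN : ∀ k : ℕ, P {ω | N ω = k} =
      ENNReal.ofReal (Real.exp (-(lam * τ)) * (lam * τ) ^ k / (Nat.factorial k)))
    (hcond : ∀ k : ℕ, 2 ≤ k → ∀ A : Set (Fin k → ℝ), MeasurableSet A →
      P {ω | N ω = k ∧ (fun i : Fin k => Θ ω i.1) ∈ A} =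
        P {ω | N ω = k} * orderStatisticsLaw τ k A) :
    (τ < c →
      ∫ ω, (((Finset.range (N ω - 1)).filter
          (fun j => Θ ω (j + 1) - Θ ω j < c)).card : ℝ) ∂P
        = lam * τ - 1 + Real.exp (-(lam * τ))) ∧
    (c ≤ τ →
      ∫ ω, (((Finset.range (N ω - 1)).filter
          (fun j => Θ ω (j + 1) - Θ ω j < c)).card : ℝ) ∂P
        = (lam * τ - 1) * (1 - Real.exp (-(lam * c)))
          + lam * c * Real.exp (-(lam * c))) := by
  have h := integral_card_gap_lt P hlam hτ hc N Θ hNmeas hΘmeas hN hcond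
  constructor
  · intro hlt
    rw [h, min_eq_right hlt.le]
    ring
  · intro hle
    rw [h, min_eq_left hle]
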